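/- Let q = p^t be a prime power, n > 2, c ∈ GF(q^n) (with c ≠ 1 if p = 2), u ∈ GF(q^n) nonzero, F : GF(q^n) → GF(q^n) a PcN function with respect to c, f : GF(q^n) → GF(q), and H(x) = F(x) + u·f(x). Then the c-differential uniformity of H satisfies _cΔ_H ≤ q²; moreover, if c ∈ GF(q), then _cΔ_H ≤ q. -/

import Mathlib

open scoped Classical

/-- The number of solutions `x` of `F(x+a) - c·F(x) = b`. -/
noncomputable def cDeltaCount {K : Type*} [Field K] [Fintype K]
    (c : K) (F : K → K) (a b : K) : ℕ :=
  (Finset.univ.filter fun x => F (x + a) - c * F x = b).card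

/-- The `c`-differential uniformity: the maximum of `cDeltaCount` over all `a, b`,
where `a ≠ 0` is required when `c = 1`. -/
noncomputable def cDU {K : Type*} [Field K] [Fintype K] (c : K) (F : K → K) : ℕ :=
  (Finset.univ.filter fun ab : K × K => c = 1 → ab.1 ≠ 0).sup
    fun ab => cDeltaCount c F ab.1 ab.2

/-- `F` is perfect `c`-nonlinear. -/
def IsPcN {K : Type*} [Field K] [Fintype K] (c : K) (F : K → K) : Prop :=
  cDU c F = 1

/-!
Taking `c`-derivatives is additive, so a solution `x` of `_cD_a(F + g)(x) = b` is a solution of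
`_cD_aF(x) = b - d` for the value `d = _cD_a g(x)`. Grouping the solutions by `d` bounds their
number by the uniformity of `F` times the number of values that `_cD_a g` can take. For `g = u · f`
with `f` valued in a subfield `L`, the pairs `(f (x + a), f x)` leave at most `|L|²` values;
if `c ∈ L`, all values lie in `u · L`.
-/

section

variable {R : Type*} [Ring R]

/-- The `c`-derivative `_cD_aF` of `F` at `a`. Its fibres are the sets that `cDeltaCount` counts. -/
def cDerivative (c : R) (F : R → R) (a x : R) : R :=
  F (x + a) - c * F x

lemma cDerivative_add (c : R) (F g : R → R) (a x : R) :
    cDerivative c (F + g) a x = cDerivative c F a x + cDerivative c g a x := by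
  simp only [cDerivative, Pi.add_apply, mul_add]
  abel

end

section

variable {K : Type*} [Field K] [Fintype K] {c : K} {F g : K → K}

lemma cDeltaCount_eq_card_fiber (c : K) (F : K → K) (a b : K) :
    cDeltaCount c F a b = (Finset.univ.filter fun x ↦ cDerivative c F a x = b).card :=
  rfl

lemma cDU_le_iff {m : ℕ} :
    cDU c F ≤ m ↔ ∀ a b, (c = 1 → a ≠ 0) → cDeltaCount c F a b ≤ m := by
  simp [cDU]

lemma cDeltaCount_le_cDU {a : K} (ha : c = 1 → a ≠ 0) (b : K) :
    cDeltaCount c F a b ≤ cDU c F :=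
  cDU_le_iff.mp le_rfl a b ha

lemma cDU_add_le_mul_card {T : Finset K} (hg : ∀ a x, cDerivative c g a x ∈ T) :
    cDU c (F + g) ≤ cDU c F * T.card := by
  refine cDU_le_iff.mpr fun a b ha ↦ ?_
  rw [cDeltaCount_eq_card_fiber]
  refine Finset.card_le_mul_card_image_of_maps_to (fun x _ ↦ hg a x) _ fun d _ ↦ ?_
  refine le_trans ?_ (cDeltaCount_le_cDU ha (b - d))
  rw [cDeltaCount_eq_card_fiber]
  refine Finset.card_le_card fun x hx ↦ ?_
  simp only [Finset.mem_filter, Finset.mem_univ, true_and, cDerivative_add] at hx ⊢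
  obtain ⟨hsol, hd⟩ := hx
  exact eq_sub_of_add_eq (hd ▸ hsol)

lemma cDU_add_le_mul_card_sq {S : Finset K} (hg : ∀ x, g x ∈ S) :
    cDU c (F + g) ≤ cDU c F * S.card ^ 2 :=
  calc
    cDU c (F + g) ≤ cDU c F * (Finset.image₂ (fun s t ↦ s - c * t) S S).card :=
      cDU_add_le_mul_card fun a x ↦ Finset.mem_image₂_of_mem (hg (x + a)) (hg x)
    _ ≤ cDU c F * S.card ^ 2 := by
      rw [sq]
      exact Nat.mul_le_mul_left _ (Finset.card_image₂_le _ S S)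

end

theorem statement2_general {K : Type*} [Field K] [Fintype K] (L : Subfield K) (c u : K)
    (F : K → K) (f : K → L) :
    cDU c (fun x => F x + u * (f x : K)) ≤ cDU c F * Nat.card L ^ 2 ∧
      (c ∈ L → cDU c (fun x => F x + u * (f x : K)) ≤ cDU c F * Nat.card L) := by
  let uL : Finset K := Finset.univ.image fun s : L ↦ u * (s : K)
  have mem_uL (s : L) : u * (s : K) ∈ uL := Finset.mem_image_of_mem _ (Finset.mem_univ s)
  have card_uL : uL.card ≤ Nat.card L := Finset.card_image_le.trans_eq (by simp)
  refine ⟨(cDU_add_le_mul_card_sq fun x ↦ mem_uL (f x)).trans (by gcongr), fun hc ↦ ?_⟩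
  refine (cDU_add_le_mul_card (T := uL) fun a x ↦ ?_).trans (by gcongr)
  have factor : cDerivative c (fun x ↦ u * (f x : K)) a x =
      u * ((f (x + a) - ⟨c, hc⟩ * f x : L) : K) := by
    simp only [cDerivative, Subfield.coe_sub, Subfield.coe_mul]
    ring
  exact factor ▸ mem_uL _

theorem statement2 (p t n : ℕ) (hp : p.Prime) (ht : 1 ≤ t) (hn : 2 < n)
    (K : Type*) [Field K] [Fintype K] (hK : Nat.card K = (p ^ t) ^ n)
    (Fq : Subfield K) (hFq : Nat.card Fq = p ^ t)
    (c : K) (hc : p = 2 → c ≠ 1)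
    (u : K) (hu : u ≠ 0)
    (F : K → K) (hF : IsPcN c F)
    (f : K → Fq) :
    cDU c (fun x => F x + u * (f x : K)) ≤ (p ^ t) ^ 2 ∧
      (c ∈ Fq → cDU c (fun x => F x + u * (f x : K)) ≤ p ^ t) := by
  have hF_one : cDU c F = 1 := hF
  simpa only [hF_one, hFq, one_mul] using statement2_general Fq c u F f
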